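/- arXiv:0802.2651 — 2 statements merged into one kernel-verified Lean document; each statement's English description precedes it below -/
import Mathlib

section
/- Let N be a positive squarefree integer, let P be a non-torsion integral point of E_N(ℚ), and let n ≥ 1 be an integer such that nP is integral. Then |ψ_n(P)| ≤ (2N)^{(n²−1)/2}. -/
/-- The congruent number curve `E_N : y² = x³ - N²x` over `ℚ`. -/
def congruentCurve (N : ℕ) : WeierstrassCurve.Affine ℚ :=
  { a₁ := 0, a₂ := 0, a₃ := 0, a₄ := -(N : ℚ) ^ 2, a₆ := 0 }

/-- The congruent number curve `E_N : y² = x³ - N²x` over `ℤ`. -/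
def congruentCurveZ (N : ℕ) : WeierstrassCurve ℤ :=
  { a₁ := 0, a₂ := 0, a₃ := 0, a₄ := -(N : ℤ) ^ 2, a₆ := 0 }

/-- The value `ψₙ(P)` of the `n`-th division polynomial of `E_N` at the integral point
`P = (a, b)`. -/
noncomputable def psiEN (N : ℕ) (a b : ℤ) (n : ℤ) : ℤ :=
  ((congruentCurveZ N).Ψ n).evalEval a b

/-- A rational point on a Weierstrass curve over `ℚ` is integral if it is an affine point
whose `x`-coordinate is an integer. -/
def IsIntegralPoint {W : WeierstrassCurve.Affine ℚ} (P : W.Point) : Prop :=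
  ∃ (x y : ℚ) (h : W.Nonsingular x y),
    P = WeierstrassCurve.Affine.Point.some _ _ h ∧ x.den = 1


/-- Symmetric biquadratic form. -/
def symG (α x y z : ℚ) : ℚ :=
  (x * y - α) ^ 2 - 2 * z * (x + y) * (α + x * y) + z ^ 2 * (x - y) ^ 2

/-- The sequence built from x-coordinates. -/
def VV (a b : ℚ) (X : ℕ → ℚ) : ℕ → ℚ
  | 0 => 0
  | 1 => 1
  | 2 => 2 * b
  | (n + 3) => (a - X (n + 2)) * VV a b X (n + 2) ^ 2 / VV a b X (n + 1)

structure XSeq (α a b : ℚ) (X : ℕ → ℚ) : Prop where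
  X1 : X 1 = a
  hb : b ≠ 0
  curve : b ^ 2 = a ^ 3 + α * a
  ne : ∀ m n, 1 ≤ m → 1 ≤ n → m ≠ n → X m ≠ X n
  add : ∀ k n, 1 ≤ n → 1 ≤ k → ∀ z,
    (X (k + 2 * n) - z) * (X k - z) * (X (k + n) - X n) ^ 2 = symG α (X (k + n)) (X n) z
  dbl : 4 * b ^ 2 * X 2 = (a ^ 2 - α) ^ 2

section
variable {α a b : ℚ} {X : ℕ → ℚ} (H : XSeq α a b X)
include H

theorem VV_ne (n : ℕ) : VV a b X (n + 1) ≠ 0 := by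
  induction n using Nat.strong_induction_on with
  | _ n ih =>
    match n, ih with
    | 0, _ => simp [VV]
    | 1, _ => simpa [VV] using H.hb
    | (n + 2), ih =>
      rw [VV]
      have h1 := ih n (by omega)
      have h2 := ih (n + 1) (by omega)
      have h3 : a - X (n + 2) ≠ 0 := by
        rw [← H.X1]; exact sub_ne_zero.mpr (H.ne 1 (n + 2) le_rfl (by omega) (by omega))
      exact div_ne_zero (mul_ne_zero h3 (pow_ne_zero _ h2)) h1

theorem VV_step (n : ℕ) :
    VV a b X (n + 2) * VV a b X n = VV a b X (n + 1) ^ 2 * (a - X (n + 1)) := by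
  match n with
  | 0 => simp [VV, H.X1]
  | (n + 1) =>
    have := VV_ne H n
    rw [show n + 1 + 2 = n + 3 from rfl, VV]
    field_simp

/-- `V_{m+n} V_{m-n}` with `m = k + n`. -/
theorem VV_R (n : ℕ) (hn : 1 ≤ n) : ∀ k, 1 ≤ k →
    VV a b X (k + 2 * n) * VV a b X k =
      VV a b X (k + n) ^ 2 * VV a b X n ^ 2 * (X n - X (k + n)) := by
  induction n using Nat.strong_induction_on with
  | _ n ih =>
    match n, hn, ih with
    | 1, _, _ =>
      intro k _
      have := VV_step H k
      rw [show k + 2 * 1 = k + 2 by ring, this, H.X1]; simp [VV]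
    | 2, _, _ =>
      intro k hk
      -- m = k+2
      have e1 := VV_step H (k + 2)
      have e2 := VV_step H (k)
      have e3 := VV_step H (k + 1)
      have hG := H.add (k + 1) 1 le_rfl (by omega) a
      have hd := H.dbl
      have hc := H.curve
      have hne := VV_ne H (k + 1)
      rw [show k + 1 + 2 * 1 = k + 3 by ring, show k + 1 + 1 = k + 2 by ring, H.X1] at hG
      simp only [symG] at hG
      rw [show k + 2 * 2 = k + 4 by ring]
      rw [show k + 2 + 2 = k + 4 by ring, show k + 2 + 1 = k + 3 by ring] at e1
      rw [show k + 1 + 2 = k + 3 by ring, show k + 1 + 1 = k + 2 by ring] at e3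
      have v2 : VV a b X 2 = 2 * b := by simp [VV]
      rw [v2]
      rw [show k + 1 + 1 = k + 2 by ring] at hne
      apply mul_right_cancel₀ (pow_ne_zero 2 hne)
      generalize VV a b X (k + 4) = v4 at *
      generalize VV a b X (k + 3) = v3 at *
      generalize VV a b X (k + 2) = v2 at *
      generalize VV a b X (k + 1) = v1 at *
      generalize VV a b X k = v0 at *
      generalize X (k + 3) = x3 at *
      generalize X (k + 2) = x2 at *
      generalize X (k + 1) = x1 at *
      have : v4 * v0 * v2 ^ 2 = v3 ^ 2 * v1 ^ 2 * ((a - x3) * (a - x1)) := by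
        linear_combination v0 * v2 * e1 + v3 ^ 2 * (a - x3) * e2
      rw [this]
      have h5 : v3 ^ 2 * v1 ^ 2 = (v2 ^ 2 * (a - x2)) ^ 2 := by rw [← e3]; ring
      rw [h5]
      have h6 : (a - x2) ^ 2 * ((a - x3) * (a - x1)) = 4 * b ^ 2 * (X 2 - x2) := by
        linear_combination hG - hd + 4 * x2 * hc
      linear_combination v2 ^ 4 * h6
    | (n + 3), _, ih =>
      intro k hk
      -- old n := n+2, m = k + n + 3
      have r1 := ih (n + 2) (by omega) (by omega) (k + 1) (by omega)
      have r2 := ih (n + 1) (by omega) (by omega) (k + 2) (by omega)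
      have e1 := VV_step H (k + 2 * n + 4)
      have e2 := VV_step H k
      have e3 := VV_step H (n + 1)
      have hG1 := H.add (k + 1) (n + 2) (by omega) (by omega) a
      have hG2 := H.add (n + 1) 1 (by omega) (by omega) (X (k + n + 3))
      have ne1 := VV_ne H (k + n + 2)
      have ne2 := VV_ne H (n)
      have ne3 := H.ne (n + 1) (k + n + 3) (by omega) (by omega) (by omega)
      rw [H.X1] at hG2
      simp only [symG] at hG1 hG2
      rw [show k + 1 + 2 * (n + 2) = k + 2 * n + 5 by ring, show k + 1 + (n + 2) = k + n + 3 by ring] at r1 hG1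
      rw [show k + 2 + 2 * (n + 1) = k + 2 * n + 4 by ring, show k + 2 + (n + 1) = k + n + 3 by ring] at r2
      rw [show k + 2 * n + 4 + 2 = k + 2 * n + 6 by ring, show k + 2 * n + 4 + 1 = k + 2 * n + 5 by ring] at e1
      rw [show n + 1 + 2 * 1 = n + 3 by ring, show n + 1 + 1 = n + 2 by ring] at hG2
      rw [show n + 1 + 2 = n + 3 by ring, show n + 1 + 1 = n + 2 by ring] at e3
      rw [show k + 2 * (n + 3) = k + 2 * n + 6 by ring, show k + (n + 3) = k + n + 3 by ring]
      rw [show k + n + 2 + 1 = k + n + 3 by ring] at ne1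
      have hL : VV a b X (k + n + 3) ^ 2 * VV a b X (n + 1) ^ 2 * (X (n + 1) - X (k + n + 3)) ≠ 0 :=
        mul_ne_zero (mul_ne_zero (pow_ne_zero _ ne1) (pow_ne_zero _ ne2)) (sub_ne_zero.mpr ne3)
      apply mul_right_cancel₀ hL
      rw [← r2]
      have s1 : VV a b X (k + 2 * n + 6) * VV a b X k * (VV a b X (k + 2 * n + 4) * VV a b X (k + 2))
        = (VV a b X (k + 2 * n + 5) * VV a b X (k + 1)) ^ 2 * ((a - X (k + 2 * n + 5)) * (a - X (k + 1))) := by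
        linear_combination VV a b X k * VV a b X (k + 2) * e1 +
          VV a b X (k + 2 * n + 5) ^ 2 * (a - X (k + 2 * n + 5)) * e2
      rw [s1, r1, r2]
      have s2 : VV a b X (n + 3) ^ 2 * VV a b X (n + 1) ^ 2 = (VV a b X (n + 2) ^ 2 * (a - X (n + 2))) ^ 2 := by
        rw [← e3]; ring
      have s3 : ((a - X (k + 2 * n + 5)) * (a - X (k + 1))) * (X (n + 2) - X (k + n + 3)) ^ 2
        = (a - X (n + 2)) ^ 2 * ((X (n + 3) - X (k + n + 3)) * (X (n + 1) - X (k + n + 3))) := by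
        linear_combination hG1 - hG2
      linear_combination VV a b X (k + n + 3) ^ 4 * VV a b X (n + 2) ^ 4 * s3
        - VV a b X (k + n + 3) ^ 4 * (X (n + 3) - X (k + n + 3)) * (X (n + 1) - X (k + n + 3)) * s2

theorem VV_rel (n : ℕ) (k : ℕ) (hk : 1 ≤ k) :
    VV a b X (k + 2 * (n + 1)) * VV a b X k =
      VV a b X (k + n + 2) * VV a b X (k + n) * VV a b X (n + 1) ^ 2
      - VV a b X (n + 2) * VV a b X n * VV a b X (k + n + 1) ^ 2 := by
  rw [VV_R H (n + 1) (by omega) k hk, VV_step H (k + n), VV_step H n,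
    show k + (n + 1) = k + n + 1 by ring]
  ring

theorem VV_eq (n : ℕ) :
    VV a b X n = normEDS (2 * b) (3 * a ^ 4 + 6 * α * a ^ 2 - α ^ 2)
      (2 * (a ^ 6 + 5 * α * a ^ 4 - 5 * α ^ 2 * a ^ 2 - α ^ 3)) n := by
  have hb := H.hb
  have hd := H.dbl
  have hc := H.curve
  have v3 : VV a b X 3 = 3 * a ^ 4 + 6 * α * a ^ 2 - α ^ 2 := by
    simp only [VV]
    linear_combination -hd + 4 * a * hc
  have hG := H.add 1 1 le_rfl le_rfl
  norm_num [H.X1] at hG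
  have hG1 := hG 1
  have hG2 := hG (-1)
  simp only [symG] at hG1 hG2
  have hX2 : X 2 = (a ^ 2 - α) ^ 2 / (4 * b ^ 2) := by field_simp; linear_combination hd
  induction n using normEDSRec with
  | zero => simp [VV]
  | one => simp [VV]
  | two => simp [VV]
  | three => simpa using v3
  | four =>
    have e := VV_step H 2
    norm_num [v3] at e ⊢
    simp only [show VV a b X 2 = 2 * b by simp [VV]] at e
    have hv3 : VV a b X 3 = (a - X 2) * (2 * b) ^ 2 := by simp [VV]
    rw [← v3, hv3] at e
    have e2 : VV a b X 4 * (2 * b) = (2 * b) ^ 4 * (2 * a * (X 2 - a) ^ 2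
      - 2 * (X 2 + a) * (α + X 2 * a)) := by
      linear_combination e + (2 * b) ^ 4 * (hG1 - hG2) / 2
    have hb2 : (2 * b) ≠ 0 := by simpa using hb
    apply mul_right_cancel₀ hb2
    rw [e2]
    have : (2 * b) ^ 4 * (2 * a * (X 2 - a) ^ 2
      - 2 * (X 2 + a) * (α + X 2 * a)) = 2 * a * (4 * b ^ 2 * X 2 - 4 * b ^ 2 * a) ^ 2 -
       2 * (4 * b ^ 2 * X 2 + 4 * b ^ 2 * a) * (4 * b ^ 2 * α + 4 * b ^ 2 * X 2 * a) := by ring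
    rw [this, hd, hc, mul_assoc _ (2 * b) (2 * b), show 2 * b * (2 * b) = 4 * b ^ 2 by ring, hc]
    ring
  | even m h1 h2 h3 h4 h5 =>
    have hb2 : (2 * b) ≠ 0 := by simpa using hb
    have r := VV_rel H (m + 1) 2 (by omega)
    have q := normEDS_even (2 * b) (3 * a ^ 4 + 6 * α * a ^ 2 - α ^ 2)
      (2 * (a ^ 6 + 5 * α * a ^ 4 - 5 * α ^ 2 * a ^ 2 - α ^ 3)) (m + 3 : ℤ)
    apply mul_right_cancel₀ hb2
    push_cast at *
    rw [q]
    rw [show (m : ℤ) + 3 - 1 = m + 2 by ring, show (m : ℤ) + 3 + 2 = m + 5 by ring,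
      show (m : ℤ) + 3 - 2 = m + 1 by ring, show (m : ℤ) + 3 + 1 = m + 4 by ring,
      ← h1, ← h2, ← h3, ← h4, ← h5]
    rw [show 2 + 2 * (m + 1 + 1) = 2 * (m + 3) by ring, show 2 + (m + 1) + 2 = m + 5 by ring,
      show 2 + (m + 1) = m + 3 by ring, show VV a b X 2 = 2 * b by simp [VV]] at r
    rw [r]
    ring_nf
  | odd m h1 h2 h3 h4 =>
    have r := VV_rel H (m + 1) 1 (by omega)
    have q := normEDS_odd (2 * b) (3 * a ^ 4 + 6 * α * a ^ 2 - α ^ 2)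
      (2 * (a ^ 6 + 5 * α * a ^ 4 - 5 * α ^ 2 * a ^ 2 - α ^ 3)) (m + 2 : ℤ)
    push_cast at *
    rw [q]
    rw [show (m : ℤ) + 2 - 1 = m + 1 by ring, show (m : ℤ) + 2 + 2 = m + 4 by ring,
      show (m : ℤ) + 2 + 1 = m + 3 by ring,
      ← h1, ← h2, ← h3, ← h4]
    rw [show 1 + 2 * (m + 1 + 1) = 2 * (m + 2) + 1 by ring, show 1 + (m + 1) + 2 = m + 4 by ring,
      show 1 + (m + 1) = m + 2 by ring, show VV a b X 1 = 1 by simp [VV]] at r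
    rw [mul_one] at r
    rw [r]
    ring_nf

end

/-- weight exponent -/
def ee (n : ℕ) : ℕ := if Even n then n ^ 2 / 4 - 1 else n ^ 2 / 4

theorem ee_even (k : ℕ) : ee (2 * (k + 1)) = k ^ 2 + 2 * k := by
  simp only [ee, even_two_mul, if_true]
  have : (2 * (k + 1)) ^ 2 = 4 * (k ^ 2 + 2 * k + 1) := by ring
  omega

theorem ee_odd (k : ℕ) : ee (2 * k + 1) = k ^ 2 + k := by
  have : ¬ Even (2 * k + 1) := by simp
  simp only [ee, this, if_false]
  have : (2 * k + 1) ^ 2 = 4 * (k ^ 2 + k) + 1 := by ring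
  omega

theorem pre_scale (s B C D : ℤ) (n : ℕ) :
    preNormEDS' (s ^ 3 * B) (s ^ 2 * C) (s ^ 3 * D) n = s ^ ee n * preNormEDS' B C D n := by
  induction n using normEDSRec with
  | zero => simp
  | one => simp [ee]
  | two => simp [ee]
  | three => simp [ee]; norm_num [show ¬ Even 3 by decide]
  | four => simp [ee]; norm_num [show Even 4 by decide]
  | even m h1 h2 h3 h4 h5 =>
    rw [preNormEDS'_even, preNormEDS'_even, h1, h2, h3, h4, h5]
    rw [show 2 * (m + 3) = 2 * ((m + 2) + 1) by ring, ee_even]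
    obtain ⟨j, rfl | rfl⟩ := Nat.even_or_odd' m
    · rw [show 2 * j + 2 = 2 * (j + 1) by ring, show 2 * j + 3 = 2 * (j + 1) + 1 by ring,
        show 2 * j + 5 = 2 * (j + 2) + 1 by ring, show 2 * j + 4 = 2 * ((j + 1) + 1) by ring,
        ee_even, ee_even, ee_odd, ee_odd, ee_odd]
      ring
    · rw [show 2 * j + 1 + 2 = 2 * (j + 1) + 1 by ring, show 2 * j + 1 + 3 = 2 * ((j + 1) + 1) by ring,
        show 2 * j + 1 + 5 = 2 * ((j + 2) + 1) by ring, show 2 * j + 1 + 4 = 2 * (j + 2) + 1 by ring,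
        show 2 * j + 1 + 1 = 2 * (j + 1) by ring,
        ee_even, ee_even, ee_even, ee_odd, ee_odd]
      ring
  | odd m h1 h2 h3 h4 =>
    rw [preNormEDS'_odd, preNormEDS'_odd, h1, h2, h3, h4]
    rw [ee_odd]
    obtain ⟨j, rfl | rfl⟩ := Nat.even_or_odd' m
    · simp only [even_two_mul, if_true]
      rw [show 2 * j + 2 = 2 * (j + 1) by ring, show 2 * j + 3 = 2 * (j + 1) + 1 by ring,
        show 2 * j + 4 = 2 * ((j + 1) + 1) by ring,
        ee_even, ee_even, ee_odd, ee_odd]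
      ring
    · simp only [show ¬ Even (2 * j + 1) by simp, if_false]
      rw [show 2 * j + 1 + 2 = 2 * (j + 1) + 1 by ring, show 2 * j + 1 + 3 = 2 * ((j + 1) + 1) by ring,
        show 2 * j + 1 + 4 = 2 * (j + 2) + 1 by ring,
        show 2 * j + 1 + 1 = 2 * (j + 1) by ring,
        ee_even, ee_even, ee_odd, ee_odd]
      ring

theorem pre_odd (B C D : ℤ) (hB : Even B) (hC : Odd C) (n : ℕ) (hn : Odd n) :
    Odd (preNormEDS' B C D n) := by
  induction n using normEDSRec with
  | zero => simp at hn
  | one => simp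
  | two => simp
  | three => simpa
  | four => exact absurd hn (by decide)
  | even m h1 h2 h3 h4 h5 => exact absurd hn (by simp)
  | odd m h1 h2 h3 h4 =>
    rw [preNormEDS'_odd]
    obtain ⟨j, rfl | rfl⟩ := Nat.even_or_odd' m
    · simp only [even_two_mul, if_true]
      refine Even.sub_odd (hB.mul_left _) ?_
      rw [mul_one]
      exact (h1 (by simp)).mul ((h3 ⟨j + 1, by ring⟩).pow)
    · simp only [show ¬ Even (2 * j + 1) by simp, if_false]
      refine Odd.sub_even ?_ (hB.mul_left _)
      rw [mul_one]
      exact (h4 ⟨j + 2, by ring⟩).mul ((h2 ⟨j + 1, by ring⟩).pow)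

def sE (S : ℤ) (n : ℕ) : ℤ := if Even n then S else 1

/-- Consecutive zeros are impossible. -/
theorem no_consec {F : Type*} [Field F] (u s : ℕ → F) (u1 : u 1 = 1) (u2 : u 2 = 1)
    (s1 : s 1 = 1)
    (sper : ∀ n, s (n + 2) = s n)
    (rel : ∀ n k, 1 ≤ k → s k * u (k + 2 * (n + 1)) * u k =
      s (k + n) * s (n + 1) * u (k + n + 2) * u (k + n) * u (n + 1) ^ 2
      - s n * s (k + n + 1) * u (n + 2) * u n * u (k + n + 1) ^ 2)
    (h23 : ¬ (s 2 = 0 ∧ u 3 = 0)) (h34 : ¬ (u 3 = 0 ∧ s 2 * u 4 = 0))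
    (k : ℕ) (hk : 1 ≤ k) (z1 : s k * u k = 0) (z2 : s (k + 1) * u (k + 1) = 0) : False := by
  classical
  have s3 : s 3 = 1 := by rw [show 3 = 1 + 2 from rfl, sper, s1]
  have s4 : s 4 = s 2 := by rw [show 4 = 2 + 2 from rfl, sper]
  have hex : ∃ r, 2 ≤ r ∧ s r * u r = 0 := ⟨k + 1, by omega, z2⟩
  set r := Nat.find hex with hr
  obtain ⟨r2, zr⟩ := Nat.find_spec hex
  rw [← hr] at r2 zr
  have hmin : ∀ j, 1 ≤ j → j < r → s j * u j ≠ 0 := by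
    intro j h1 h2 h
    rcases Nat.lt_or_ge j 2 with h3 | h3
    · have : j = 1 := by omega
      subst this; simp [u1, s1] at h
    · exact Nat.find_min hex h2 ⟨h3, h⟩
  clear_value r
  have zr1 : s (r + 1) * u (r + 1) ≠ 0 := by
    intro h
    rcases Nat.lt_or_ge r 4 with h4 | h4
    · interval_cases r
      · apply h23; simpa [u2, s3] using And.intro zr h
      · apply h34; simpa [s3, s4] using And.intro zr h
    · obtain ⟨q, rfl⟩ : ∃ q, r = q + 4 := ⟨r - 4, by omega⟩
      have := rel 1 (q + 1) (by omega)
      rw [show q + 1 + 2 * (1 + 1) = q + 5 by ring, show q + 1 + 1 + 2 = q + 4 by ring,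
        show q + 1 + 1 + 1 = q + 3 by ring, show 1 + 2 = 3 by rfl, u1, s1] at this
      have e1 : s (q + 1) = s (q + 4 + 1) := by
        rw [show q + 4 + 1 = q + 1 + 2 + 2 by ring, sper, sper]
      have e2 : s (q + 1 + 1) = s (q + 4) := (sper _).symm
      rw [e1, e2, show q + 5 = q + 4 + 1 by ring] at this
      have h3 := hmin 3 (by omega) (by omega)
      have hq := hmin (q + 3) (by omega) (by omega)
      have : s (q + 3) * u 3 * u (q + 3) ^ 2 = 0 := by
        linear_combination this - u (q+1) * h + s (1 + 1) * u (q + 1 + 1) * u (1+1)^2 * zr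
      simp only [mul_eq_zero, pow_eq_zero_iff two_ne_zero, not_or, ne_eq] at h3 hq this
      tauto
  -- multiples
  obtain ⟨q, rfl⟩ : ∃ q, r = q + 2 := ⟨r - 2, by omega⟩
  have hq1 := hmin (q + 1) (by omega) (by omega)
  have step : ∀ m, 1 ≤ m → s m * u m ≠ 0 → s (m + (q + 2)) * u (m + (q + 2)) ≠ 0 := by
    intro m hm hz h
    rcases lt_trichotomy m (q + 2) with hlt | heq | hgt
    · -- n + 1 = m, k + m = q+2
      obtain ⟨n, rfl⟩ : ∃ n, m = n + 1 := ⟨m - 1, by omega⟩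
      obtain ⟨k, hk, hkq⟩ : ∃ k, 1 ≤ k ∧ k + n = q + 1 := ⟨q + 1 - n, by omega, by omega⟩
      have R := rel n k hk
      have e0 : s k = s (n + 1 + (q + 2)) := by
        rw [show n + 1 + (q + 2) = k + 2 * (n + 1) by omega]
        clear * - sper
        induction n with
        | zero => simp [sper]
        | succ n ih => rw [show k + 2 * (n + 1 + 1) = k + 2 * (n + 1) + 2 by ring, sper, ih]
      rw [e0, show k + 2 * (n + 1) = n + 1 + (q + 2) by omega, hkq, show q + 1 + 1 = q + 2 by ring,
        show q + 1 + 2 = q + 2 + 1 by ring] at R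
      have e1 : s (q + 2 + 1) = s (q + 1) := by rw [show q + 2 + 1 = q + 1 + 2 by ring, sper]
      rw [e1] at zr1
      have : s (q + 1) * s (n + 1) * u (q + 2 + 1) * u (q + 1) * u (n + 1) ^ 2 = 0 := by
        linear_combination -R + u k * h + s n * u (n + 2) * u n * u (q + 2) * zr
      simp only [mul_eq_zero, pow_eq_zero_iff two_ne_zero, not_or, ne_eq] at zr1 hq1 hz this
      tauto
    · subst heq; exact hz zr
    · obtain ⟨k, hk, rfl⟩ : ∃ k, 1 ≤ k ∧ m = k + (q + 2) := ⟨m - (q + 2), by omega, by omega⟩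
      have R := rel (q + 1) k hk
      have e0 : s k = s (k + (q + 2) + (q + 2)) := by
        rw [show k + (q + 2) + (q + 2) = k + 2 * (q + 2) by ring]
        generalize q + 2 = n
        clear * - sper
        induction n with
        | zero => simp
        | succ n ih => rw [show k + 2 * (n + 1) = k + 2 * n + 2 by ring, sper, ih]
      rw [e0, show k + 2 * (q + 1 + 1) = k + (q + 2) + (q + 2) by ring,
        show q + 1 + 1 = q + 2 by ring, show k + (q + 1) + 1 = k + (q + 2) by ring,
        show q + 1 + 2 = q + 2 + 1 by ring] at R
      have e1 : s (q + 2 + 1) = s (q + 1) := by rw [show q + 2 + 1 = q + 1 + 2 by ring, sper]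
      rw [e1] at zr1
      have : s (q + 1) * s (k + (q + 2)) * u (q + 2 + 1) * u (q + 1) * u (k + (q + 2)) ^ 2 = 0 := by
        linear_combination R - u k * h +
          s (k + (q + 1)) * u (k + (q + 1) + 2) * u (k + (q + 1)) * u (q + 2) * zr
      simp only [mul_eq_zero, pow_eq_zero_iff two_ne_zero, not_or, ne_eq] at zr1 hq1 hz this
      tauto
  have main : ∀ j, 1 ≤ j → s j * u j = 0 → (q + 2) ∣ j := by
    intro j
    induction j using Nat.strong_induction_on with
    | _ j ih =>
      intro hj hz
      rcases lt_trichotomy j (q + 2) with hlt | heq | hgt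
      · exact absurd hz (hmin j hj hlt)
      · rw [heq]
      · obtain ⟨i, hi, rfl⟩ : ∃ i, 1 ≤ i ∧ j = i + (q + 2) := ⟨j - (q + 2), by omega, by omega⟩
        have : s i * u i = 0 := by
          by_contra hne
          exact step i hi hne hz
        exact Nat.dvd_add (ih i (by omega) hi this) dvd_rfl
  have d1 := main k hk z1
  have d2 := main (k + 1) (by omega) z2
  have := (Nat.dvd_add_right d1).mp d2
  have := Nat.le_of_dvd one_pos this
  omega

open WeierstrassCurve.Affine WeierstrassCurve.Affine.Point in
theorem pt_add (N : ℕ) {x1 y1 x2 y2 x3 y3 x4 y4 : ℚ} {h1 : (congruentCurve N).Nonsingular x1 y1}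
    {h2 : (congruentCurve N).Nonsingular x2 y2} {h3 : (congruentCurve N).Nonsingular x3 y3}
    {h4 : (congruentCurve N).Nonsingular x4 y4} (hx : x1 ≠ x2)
    (e3 : some _ _ h1 + some _ _ h2 = some _ _ h3) (e4 : some _ _ h1 - some _ _ h2 = some _ _ h4)
    (z : ℚ) : (x3 - z) * (x4 - z) * (x1 - x2) ^ 2 = symG (-(N : ℚ) ^ 2) x1 x2 z := by
  have c1 := (equation_iff _ _).mp h1.1
  have c2 := (equation_iff _ _).mp h2.1
  rw [add_of_X_ne hx] at e3
  rw [sub_eq_add_neg, neg_some, add_of_X_ne hx] at e4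
  obtain ⟨e3, -⟩ := (some.injEq ..).mp e3
  obtain ⟨e4, -⟩ := (some.injEq ..).mp e4
  rw [slope_of_X_ne hx] at e3 e4
  simp [congruentCurve, addX, negY] at e3 e4 c1 c2
  have hd : x1 - x2 ≠ 0 := sub_ne_zero.mpr hx
  have f3 : x3 * (x1 - x2) ^ 2 = (y1 - y2) ^ 2 - (x1 + x2) * (x1 - x2) ^ 2 := by
    rw [← e3]; field_simp; ring
  have f4 : x4 * (x1 - x2) ^ 2 = (y1 + y2) ^ 2 - (x1 + x2) * (x1 - x2) ^ 2 := by
    rw [← e4]; field_simp; ring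
  apply mul_right_cancel₀ (pow_ne_zero 2 hd)
  have : (x3 - z) * (x4 - z) * (x1 - x2) ^ 2 * (x1 - x2) ^ 2 =
    ((y1 - y2) ^ 2 - (x1 + x2 + z) * (x1 - x2) ^ 2) * ((y1 + y2) ^ 2 - (x1 + x2 + z) * (x1 - x2) ^ 2) := by
    rw [show (x3 - z) * (x4 - z) * (x1 - x2) ^ 2 * (x1 - x2) ^ 2 =
      (x3 * (x1 - x2) ^ 2 - z * (x1 - x2) ^ 2) * (x4 * (x1 - x2) ^ 2 - z * (x1 - x2) ^ 2) by ring, f3, f4]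
    ring
  rw [this]
  have : ((y1 - y2) ^ 2 - (x1 + x2 + z) * (x1 - x2) ^ 2) * ((y1 + y2) ^ 2 - (x1 + x2 + z) * (x1 - x2) ^ 2)
    = (y1 ^ 2 - y2 ^ 2) ^ 2 - 2 * (y1 ^ 2 + y2 ^ 2) * ((x1 + x2 + z) * (x1 - x2) ^ 2) +
      ((x1 + x2 + z) * (x1 - x2) ^ 2) ^ 2 := by ring
  rw [this, c1, c2, symG]
  ring

open WeierstrassCurve.Affine WeierstrassCurve.Affine.Point in
theorem pt_dbl (N : ℕ) {x1 y1 x3 y3 : ℚ} {h1 : (congruentCurve N).Nonsingular x1 y1}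
    {h3 : (congruentCurve N).Nonsingular x3 y3}
    (e3 : some _ _ h1 + some _ _ h1 = some _ _ h3) :
    y1 ≠ 0 ∧ y1 ^ 2 = x1 ^ 3 + (-(N : ℚ) ^ 2) * x1 ∧
      4 * y1 ^ 2 * x3 = (x1 ^ 2 - (-(N : ℚ) ^ 2)) ^ 2 := by
  have c1 := (equation_iff _ _).mp h1.1
  have hy : y1 ≠ (congruentCurve N).negY x1 y1 := by
    intro hy
    rw [add_self_of_Y_eq hy] at e3
    exact absurd e3 (by simp [WeierstrassCurve.Affine.Point.zero_def])
  rw [add_self_of_Y_ne hy] at e3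
  obtain ⟨e3, -⟩ := (some.injEq ..).mp e3
  rw [slope_of_Y_ne rfl hy] at e3
  simp [congruentCurve, addX, negY] at e3 c1 hy
  have hy0 : y1 ≠ 0 := by
    rintro rfl; simp at hy
  refine ⟨hy0, by linear_combination c1, ?_⟩
  have : 4 * y1 ^ 2 * x3 = (3 * x1 ^ 2 - N ^ 2) ^ 2 - 8 * x1 * y1 ^ 2 := by
    rw [← e3]
    rw [show y1 + y1 = 2 * y1 by ring]
    field_simp
    ring
  rw [this, c1]; ring

open WeierstrassCurve.Affine WeierstrassCurve.Affine.Point in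
theorem exists_XSeq (N : ℕ) (a b : ℚ) (h : (congruentCurve N).Nonsingular a b)
    (hP : ∀ m : ℤ, 1 ≤ m → m • (some _ _ h) ≠ 0) :
    ∃ X : ℕ → ℚ, XSeq (-(N : ℚ) ^ 2) a b X ∧
      (∀ k : ℕ, 1 ≤ k → ∃ y h', k • (some _ _ h) = some (X k) y h') ∧
      (∀ k : ℕ, 1 ≤ k → ∃ y, y ≠ 0 ∧ y ^ 2 = X k ^ 3 + (-(N : ℚ) ^ 2) * X k ∧
        4 * y ^ 2 * X (2 * k) = (X k ^ 2 - (-(N : ℚ) ^ 2)) ^ 2) := by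
  set P : (congruentCurve N).Point := some _ _ h with hPdef
  have hP' : ∀ k : ℕ, 1 ≤ k → k • P ≠ 0 := by
    intro k hk
    have := hP k (by exact_mod_cast hk)
    rwa [natCast_zsmul] at this
  have ex : ∀ k : ℕ, ∃ x : ℚ, 1 ≤ k → ∃ y h', k • P = some x y h' := by
    intro k
    by_cases hk : 1 ≤ k
    · have h0 := hP' k hk
      rcases hQ : k • P with _ | ⟨x, y, h'⟩
      · exact absurd hQ h0
      · exact ⟨x, fun _ => ⟨y, h', rfl⟩⟩
    · exact ⟨0, fun h => absurd h hk⟩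
  choose X hX using ex
  have hne' : ∀ m n, 1 ≤ n → n < m → X m ≠ X n := by
    intro m n hn hmn hXX
    obtain ⟨y1, h1, e1⟩ := hX m (by omega)
    obtain ⟨y2, h2, e2⟩ := hX n hn
    rcases Y_eq_of_X_eq h1.1 h2.1 hXX with hy | hy
    · have : m • P = n • P := by
        rw [e1, e2]; congr 1
      apply hP' (m - n) (by omega)
      have h3 : (m - n) • P + n • P = n • P := by
        rw [← add_nsmul, Nat.sub_add_cancel hmn.le, this]
      simpa using h3
    · apply hP' (m + n) (by omega)
      rw [add_nsmul, e1, e2]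
      exact add_of_Y_eq hXX hy
  have hne : ∀ m n, 1 ≤ m → 1 ≤ n → m ≠ n → X m ≠ X n := by
    intro m n hm hn hmn
    rcases lt_or_gt_of_ne hmn with hl | hl
    · exact (hne' n m hm hl).symm
    · exact hne' m n hn hl
  have hdbl : ∀ k : ℕ, 1 ≤ k → ∀ y h', k • P = some (X k) y h' → y ≠ 0 ∧
      y ^ 2 = X k ^ 3 + (-(N : ℚ) ^ 2) * X k ∧
        4 * y ^ 2 * X (2 * k) = (X k ^ 2 - (-(N : ℚ) ^ 2)) ^ 2 := by
    intro k hk y h' e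
    obtain ⟨y2, h2, e2⟩ := hX (2 * k) (by omega)
    have e3 : k • P + k • P = some (X (2 * k)) y2 h2 := by rw [← add_nsmul, ← two_mul]; exact e2
    rw [e] at e3
    exact pt_dbl N e3
  have hX1 : X 1 = a := by
    obtain ⟨y1, h1, e1⟩ := hX 1 le_rfl
    rw [one_nsmul, hPdef] at e1
    exact ((some.injEq ..).mp e1).1.symm
  have hd1 : b ≠ 0 ∧ b ^ 2 = a ^ 3 + (-(N : ℚ) ^ 2) * a ∧
        4 * b ^ 2 * X 2 = (a ^ 2 - (-(N : ℚ) ^ 2)) ^ 2 := by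
    obtain ⟨y2, h2, e2⟩ := hX 2 (by omega)
    rw [two_nsmul] at e2
    exact pt_dbl N e2
  refine ⟨X, ⟨hX1, hd1.1, hd1.2.1, hne, ?_, hd1.2.2⟩, hX, ?_⟩
  · intro k n hn hk z
    obtain ⟨y1, h1, e1⟩ := hX (k + n) (by omega)
    obtain ⟨y2, h2, e2⟩ := hX n hn
    obtain ⟨y3, h3, e3⟩ := hX (k + 2 * n) (by omega)
    obtain ⟨y4, h4, e4⟩ := hX k hk
    refine pt_add N (hne _ _ (by omega) hn (by omega)) (h1 := h1) (h2 := h2) (h3 := h3) (h4 := h4)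
      ?_ ?_ z
    · rw [← e1, ← e2, ← e3, ← add_nsmul]; congr 1; ring
    · rw [← e1, ← e2, ← e4, add_nsmul]; simp
  · intro k hk
    obtain ⟨y, h', e⟩ := hX k hk
    exact ⟨y, hdbl k hk y h' e⟩

/-- `x(2Q)` is never integral. -/
theorem dbl_not_int (N : ℕ) (hsq : Squarefree N) (x y : ℚ) (Z : ℤ) (hy : y ≠ 0)
    (hc : y ^ 2 = x ^ 3 + (-(N : ℚ) ^ 2) * x)
    (hd : 4 * y ^ 2 * (Z : ℚ) = (x ^ 2 - (-(N : ℚ) ^ 2)) ^ 2) : False := by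
  have sq : ∀ (W : ℤ) (w : ℚ), 4 * y ^ 2 * (W : ℚ) = w ^ 2 → ∃ r : ℤ, W = r ^ 2 := by
    intro W w hw
    have : IsSquare ((W : ℤ) : ℚ) := ⟨w / (2 * y), by field_simp; linear_combination hw⟩
    rw [Rat.isSquare_intCast_iff] at this
    obtain ⟨r, hr⟩ := this
    exact ⟨r, by rw [hr]; ring⟩
  obtain ⟨r, hr⟩ := sq Z _ hd
  obtain ⟨s, hs⟩ := sq (Z - N) (x ^ 2 - 2 * N * x - N ^ 2) (by
    push_cast; linear_combination hd - 4 * N * hc)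
  obtain ⟨t, ht⟩ := sq (Z + N) (x ^ 2 + 2 * N * x - N ^ 2) (by
    push_cast; linear_combination hd + 4 * N * hc)
  have h4 : ¬ (4 : ℤ) ∣ N := by
    intro h
    have h : 2 * 2 ∣ N := by exact_mod_cast h
    have := hsq 2 h
    simp at this
  have m : ∀ q : ℤ, (q ^ 2 % 4 = 0 ∨ q ^ 2 % 4 = 1) := by
    intro q
    rcases Int.even_or_odd' q with ⟨c, rfl | rfl⟩
    · left; ring_nf; omega
    · right; ring_nf; omega
  rcases m r with h1 | h1 <;> rcases m s with h2 | h2 <;> rcases m t with h3 | h3 <;> omega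

/-- reduced sequence -/
def uu (a N : ℤ) (n : ℕ) : ℤ :=
  preNormEDS' ((4 * a * (a ^ 2 - N ^ 2)) ^ 2) (3 * a ^ 4 - 6 * N ^ 2 * a ^ 2 - N ^ 4)
    (2 * (a ^ 6 - 5 * N ^ 2 * a ^ 4 - 5 * N ^ 4 * a ^ 2 + N ^ 6)) n

theorem uu_scale (t a N b : ℤ) (hb : b ^ 2 = (t * a) ^ 3 - (t * N) ^ 2 * (t * a)) (n : ℕ) :
    preNormEDS' ((2 * b) ^ 4) (3 * (t * a) ^ 4 + 6 * (-(t * N) ^ 2) * (t * a) ^ 2 - (-(t * N) ^ 2) ^ 2)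
      (2 * ((t * a) ^ 6 + 5 * (-(t * N) ^ 2) * (t * a) ^ 4 - 5 * (-(t * N) ^ 2) ^ 2 * (t * a) ^ 2
        - (-(t * N) ^ 2) ^ 3)) n = t ^ (2 * ee n) * uu a N n := by
  rw [pow_mul, uu, ← pre_scale]
  congr 1
  · rw [show (2 * b) ^ 4 = 16 * (b ^ 2) ^ 2 by ring, hb]; ring
  · ring
  · ring

theorem VV_uu (t a N b : ℤ) (X : ℕ → ℚ)
    (hb : b ^ 2 = (t * a) ^ 3 - (t * N) ^ 2 * (t * a))
    (H : XSeq (-((t * N : ℤ) : ℚ) ^ 2) ((t * a : ℤ) : ℚ) b X) (n : ℕ) :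
    VV ((t * a : ℤ) : ℚ) b X n = (if Even n then 2 * (b : ℚ) else 1) * (t : ℚ) ^ (2 * ee n) * uu a N n := by
  rw [VV_eq H n, normEDS_ofNat]
  have h1 := uu_scale t a N b hb n
  have h2 := congrArg (Int.castRingHom ℚ) h1
  rw [map_preNormEDS'] at h2
  simp only [map_mul, map_pow, eq_intCast, map_sub, map_add, map_neg, map_ofNat] at h2
  push_cast at h2 ⊢
  rw [h2]; ring

theorem VV_prod (t a N b : ℤ) (X : ℕ → ℚ)
    (hb : b ^ 2 = (t * a) ^ 3 - (t * N) ^ 2 * (t * a))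
    (H : XSeq (-((t * N : ℤ) : ℚ) ^ 2) ((t * a : ℤ) : ℚ) b X) (k m : ℕ) :
    (t : ℚ) * (VV ((t * a : ℤ) : ℚ) b X k * VV ((t * a : ℤ) : ℚ) b X (k + 2 * m)) =
      (t : ℚ) ^ (k ^ 2 + 2 * k * m + 2 * m ^ 2) *
        (sE (4 * a * (a ^ 2 - N ^ 2)) k * uu a N k * uu a N (k + 2 * m) : ℤ) := by
  rcases Nat.eq_zero_or_pos k with rfl | hk
  · simp [VV, uu]
  rw [VV_uu t a N b X hb H, VV_uu t a N b X hb H]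
  have hb' : (b : ℚ) ^ 2 = (t * a) ^ 3 - (t * N) ^ 2 * (t * a) := by exact_mod_cast hb
  obtain ⟨j, rfl | rfl⟩ := Nat.even_or_odd' k
  · obtain ⟨i, rfl⟩ : ∃ i, j = i + 1 := ⟨j - 1, by omega⟩
    rw [show 2 * (i + 1) + 2 * m = 2 * ((i + m) + 1) by ring, ee_even, ee_even]
    simp only [even_two_mul, if_true, sE]
    push_cast
    have : (t : ℚ) * (2 * (b : ℚ) * t ^ (2 * (i ^ 2 + 2 * i)) * (uu a N (2 * (i + 1))) *
      (2 * (b : ℚ) * t ^ (2 * ((i + m) ^ 2 + 2 * (i + m))) * (uu a N (2 * (i + m + 1))))) =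
      4 * (b : ℚ) ^ 2 * (t * (t ^ (2 * (i ^ 2 + 2 * i)) * t ^ (2 * ((i + m) ^ 2 + 2 * (i + m)))) *
        (uu a N (2 * (i + 1))) * (uu a N (2 * (i + m + 1)))) := by ring
    rw [this, hb']
    ring
  · rw [show 2 * j + 1 + 2 * m = 2 * (j + m) + 1 by ring, ee_odd, ee_odd]
    simp only [show ∀ j, ¬ Even (2 * j + 1) by simp, if_false, sE]
    push_cast
    ring

theorem uu_rel (t a N b : ℤ) (X : ℕ → ℚ) (ht : t ≠ 0)
    (hb : b ^ 2 = (t * a) ^ 3 - (t * N) ^ 2 * (t * a))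
    (H : XSeq (-((t * N : ℤ) : ℚ) ^ 2) ((t * a : ℤ) : ℚ) b X) (n k : ℕ) (hk : 1 ≤ k) :
    let s := sE (4 * a * (a ^ 2 - N ^ 2))
    let u := uu a N
    s k * u (k + 2 * (n + 1)) * u k =
      s (k + n) * s (n + 1) * u (k + n + 2) * u (k + n) * u (n + 1) ^ 2
      - s n * s (k + n + 1) * u (n + 2) * u n * u (k + n + 1) ^ 2 := by
  intro s u
  have R := VV_rel H n k hk
  have p1 := VV_prod t a N b X hb H k (n + 1)
  have p2 := VV_prod t a N b X hb H (k + n) 1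
  have p3 := VV_prod t a N b X hb H (n + 1) 0
  have p4 := VV_prod t a N b X hb H n 1
  have p5 := VV_prod t a N b X hb H (k + n + 1) 0
  simp only [mul_one, mul_zero, add_zero] at p2 p3 p4 p5
  have ht' : (t : ℚ) ≠ 0 := by exact_mod_cast ht
  have : (t : ℚ) ^ (1 + k ^ 2 + 2 * k * (n + 1) + 2 * (n + 1) ^ 2) *
     ((s k * u (k + 2 * (n + 1)) * u k : ℤ) : ℚ) =
     (t : ℚ) ^ (1 + k ^ 2 + 2 * k * (n + 1) + 2 * (n + 1) ^ 2) *
     (( s (k + n) * s (n + 1) * u (k + n + 2) * u (k + n) * u (n + 1) ^ 2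
      - s n * s (k + n + 1) * u (n + 2) * u n * u (k + n + 1) ^ 2 : ℤ) : ℚ) := by
    push_cast at *
    generalize VV ((t : ℚ) * a) b X = V at *
    have e : (t : ℚ) * (t * (V k * V (k + 2 * (n + 1)))) =
      (t * (V (k + n) * V (k + n + 2))) * (t * (V (n + 1) * V (n + 1))) -
      (t * (V n * V (n + 2))) * (t * (V (k + n + 1) * V (k + n + 1))) := by
      linear_combination (t : ℚ) ^ 2 * R
    rw [p1, p2, p3, p4, p5] at e
    simp only [s, u]
    generalize sE (4 * a * (a ^ 2 - N ^ 2)) = s' at e ⊢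
    generalize uu a N = u' at e ⊢
    ring_nf at e ⊢
    linear_combination e
  have := mul_left_cancel₀ (pow_ne_zero _ ht') this
  exact_mod_cast this

theorem uu_step (t a N b : ℤ) (X : ℕ → ℚ) (ht : t ≠ 0)
    (hb : b ^ 2 = (t * a) ^ 3 - (t * N) ^ 2 * (t * a))
    (H : XSeq (-((t * N : ℤ) : ℚ) ^ 2) ((t * a : ℤ) : ℚ) b X) (n : ℕ) (hn : Even n)
    (Z : ℤ) (hZ : X (n + 1) = Z) :
    t * (4 * a * (a ^ 2 - N ^ 2) * uu a N (n + 2) * uu a N n) =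
      uu a N (n + 1) ^ 2 * (t * a - Z) := by
  have R := VV_step H n
  have p4 := VV_prod t a N b X hb H n 1
  have p5 := VV_prod t a N b X hb H (n + 1) 0
  simp only [mul_one, mul_zero, add_zero] at p4 p5
  have ht' : (t : ℚ) ≠ 0 := by exact_mod_cast ht
  have hn' : ¬ Even (n + 1) := by simpa [Nat.even_add_one] using hn
  simp only [sE, hn, hn', if_true, if_false] at p4 p5
  have : (t : ℚ) ^ ((n + 1) ^ 2) * ((t * (4 * a * (a ^ 2 - N ^ 2) * uu a N (n + 2) * uu a N n) : ℤ) : ℚ)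
     = (t : ℚ) ^ ((n + 1) ^ 2) * ((uu a N (n + 1) ^ 2 * (t * a - Z) : ℤ) : ℚ) := by
    push_cast at *
    generalize VV ((t : ℚ) * a) b X = V at *
    have e : (t * (V n * V (n + 2))) = t * (V (n + 1) * V (n + 1)) * (t * a - Z) := by
      rw [← hZ]; linear_combination t * R
    rw [p4, p5] at e
    ring_nf at e ⊢
    exact e
  have := mul_left_cancel₀ (pow_ne_zero _ ht') this
  exact_mod_cast this

theorem zmod_cop {p : ℕ} [Fact p.Prime] (a N : ℤ) (hc : IsCoprime a N) :
    ¬ ((a : ZMod p) = 0 ∧ (N : ZMod p) = 0) := by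
  rintro ⟨h1, h2⟩
  obtain ⟨x, y, h⟩ := hc
  have := congrArg (Int.cast : ℤ → ZMod p) h
  push_cast at this
  rw [h1, h2] at this
  simp at this

theorem cop_aux {p : ℕ} [Fact p.Prime] (hp : p ≠ 2) (a N : ZMod p) (hc : ¬ (a = 0 ∧ N = 0))
    (h3 : 3 * a ^ 4 - 6 * N ^ 2 * a ^ 2 - N ^ 4 = 0) :
    4 * a * (a ^ 2 - N ^ 2) ≠ 0 ∧
      2 * (a ^ 6 - 5 * N ^ 2 * a ^ 4 - 5 * N ^ 4 * a ^ 2 + N ^ 6) ≠ 0 := by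
  have two : (2 : ZMod p) ≠ 0 := by
    intro h
    have : ((2 : ℕ) : ZMod p) = 0 := by exact_mod_cast h
    rw [ZMod.natCast_eq_zero_iff] at this
    exact hp ((Nat.prime_dvd_prime_iff_eq Fact.out Nat.prime_two).mp this)
  have z : ∀ {x : ZMod p} {k : ℕ}, x ^ k = 0 → x = 0 := fun h => eq_zero_of_pow_eq_zero h
  have z2 : ∀ {x : ZMod p} (k : ℕ), 2 ^ k * x = 0 → x = 0 := fun k h =>
    (mul_eq_zero.mp h).resolve_left (pow_ne_zero _ two)
  have A1 : a ≠ 0 := by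
    rintro h
    exact hc ⟨h, z (k := 4) (by rw [h] at h3; linear_combination -h3)⟩
  have A2 : a ^ 2 - N ^ 2 ≠ 0 := by
    intro h
    have hN : N = 0 := z (k := 4) (z2 2 (by linear_combination (3 * a ^ 2 - 3 * N ^ 2) * h - h3))
    rw [hN] at h
    exact A1 (z (k := 2) (by linear_combination h))
  have A3 : a ^ 2 + N ^ 2 ≠ 0 := by
    intro h
    have hN : N = 0 := z (k := 4) (z2 3 (by linear_combination (-3 * a ^ 2 + 9 * N ^ 2) * h + h3))
    rw [hN] at h
    exact A1 (z (k := 2) (by linear_combination h))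
  have A4 : a ^ 4 - 6 * N ^ 2 * a ^ 2 + N ^ 4 ≠ 0 := by
    intro h
    have := z2 1 (x := (a ^ 2 - N ^ 2) * (a ^ 2 + N ^ 2)) (by linear_combination h3 - h)
    exact mul_ne_zero A2 A3 this
  constructor
  · rw [show (4 : ZMod p) = 2 * 2 by norm_num]
    exact mul_ne_zero (mul_ne_zero (mul_ne_zero two two) A1) A2
  · rw [show a ^ 6 - 5 * N ^ 2 * a ^ 4 - 5 * N ^ 4 * a ^ 2 + N ^ 6 =
      (a ^ 2 + N ^ 2) * (a ^ 4 - 6 * N ^ 2 * a ^ 2 + N ^ 4) by ring]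
    exact mul_ne_zero two (mul_ne_zero A3 A4)

theorem uu_odd_prime (t a N b : ℤ) (X : ℕ → ℚ) (ht : t ≠ 0) (hsq : Squarefree t)
    (hb : b ^ 2 = (t * a) ^ 3 - (t * N) ^ 2 * (t * a)) (hc : IsCoprime a N)
    (H : XSeq (-((t * N : ℤ) : ℚ) ^ 2) ((t * a : ℤ) : ℚ) b X) (n : ℕ) (hn : Odd n)
    (Z : ℤ) (hZ : X n = Z) (p : ℕ) (hp : p.Prime) (hp2 : p ≠ 2) : ¬ (p : ℤ) ∣ uu a N n := by
  intro hd
  have : Fact p.Prime := ⟨hp⟩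
  obtain ⟨n, rfl⟩ : ∃ m, n = m + 1 := ⟨n - 1, by have := hn.pos; omega⟩
  have hne : Even n := by
    by_contra h
    rw [Nat.not_even_iff_odd] at h
    exact absurd hn (by simpa [Nat.odd_add_one] using h)
  have st := uu_step t a N b X ht hb H n hne Z hZ
  have pp : Prime (p : ℤ) := Nat.prime_iff_prime_int.mp hp
  have d2 : (p : ℤ) * p ∣ t * (4 * a * (a ^ 2 - N ^ 2) * uu a N (n + 2) * uu a N n) := by
    rw [st, pow_two]
    exact Dvd.dvd.mul_right (mul_dvd_mul hd hd) _
  have d1 : (p : ℤ) ∣ 4 * a * (a ^ 2 - N ^ 2) * uu a N (n + 2) * uu a N n := by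
    by_contra hnd
    have hcop : IsCoprime ((p : ℤ) * p) (4 * a * (a ^ 2 - N ^ 2) * uu a N (n + 2) * uu a N n) := by
      have := (pp.coprime_iff_not_dvd).mpr hnd
      exact this.mul_left this
    have := hsq _ (hcop.dvd_of_dvd_mul_right d2)
    exact pp.not_isUnit this
  have hcz := zmod_cop (p := p) a N hc
  have cz : ∀ x : ℤ, (p : ℤ) ∣ x ↔ (x : ZMod p) = 0 := fun x =>
    (ZMod.intCast_zmod_eq_zero_iff_dvd x p).symm
  set s : ℕ → ZMod p := fun k => (sE (4 * a * (a ^ 2 - N ^ 2)) k : ℤ) with hs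
  set u : ℕ → ZMod p := fun k => (uu a N k : ℤ) with hu
  have hs2 : s 2 = 4 * a * (a ^ 2 - N ^ 2) := by simp [hs, sE]
  have hu3 : u 3 = 3 * a ^ 4 - 6 * N ^ 2 * a ^ 2 - N ^ 4 := by simp [hu, uu]
  have hu4 : u 4 = 2 * (a ^ 6 - 5 * N ^ 2 * a ^ 4 - 5 * N ^ 4 * a ^ 2 + N ^ 6) := by simp [hu, uu]
  have key := no_consec u s (by simp [hu, uu]) (by simp [hu, uu]) (by simp [hs, sE])
    (by intro n; simp [hs, sE, Nat.even_add]) (by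
      intro n k hk
      have := congrArg (Int.cast : ℤ → ZMod p) (uu_rel t a N b X ht hb H n k hk)
      push_cast at this
      exact this)
    (by
      rw [hs2, hu3]
      rintro ⟨h2, h3⟩
      exact (cop_aux hp2 _ _ hcz h3).1 h2)
    (by
      rw [hs2, hu3, hu4]
      rintro ⟨h3, h4⟩
      have := cop_aux hp2 _ _ hcz h3
      exact mul_ne_zero this.1 this.2 h4)
  have hd' : s (n + 1) * u (n + 1) = 0 := by
    rw [cz] at hd; simp [hu, hd]
  have sn : s n = 4 * a * (a ^ 2 - N ^ 2) := by simp [hs, sE, hne]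
  have sn2 : s (n + 1 + 1) = 4 * a * (a ^ 2 - N ^ 2) := by simp [hs, sE, hne, Nat.even_add]
  rw [cz] at d1
  push_cast at d1
  rcases mul_eq_zero.mp d1 with h | h
  · refine key (n + 1) (by omega) hd' ?_
    rw [sn2]; exact h
  · rcases Nat.eq_zero_or_pos n with h0 | h0
    · subst h0
      simp [uu] at hd
      exact hp.one_lt.ne' (by exact_mod_cast Int.eq_one_of_dvd_one (by positivity) hd)
    · refine key n h0 ?_ hd'
      simp [hu, h]

theorem uu_two (a N : ℤ) (hc : IsCoprime a N) (n : ℕ) (hn : Odd n) :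
    ∃ j w, j ≤ ee n ∧ Odd w ∧ uu a N n = 2 ^ j * w := by
  rcases Int.even_or_odd' a with ⟨x, hx⟩
  rcases Int.even_or_odd' N with ⟨y, hy⟩
  rcases hx with hx | hx <;> rcases hy with hy | hy
  · exfalso
    have := hc.isUnit_of_dvd' (Dvd.intro x hx.symm) (Dvd.intro y hy.symm)
    exact absurd this (by decide)
  · refine ⟨0, _, Nat.zero_le _, ?_, (by rw [pow_zero, one_mul])⟩
    refine pre_odd _ _ _ ?_ ?_ n hn
    · simp [Int.even_mul, Int.even_pow, show Even (4 : ℤ) by decide]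
    · subst hx hy
      simp [← Int.not_even_iff_odd, Int.even_sub, Int.even_mul, Int.even_pow, Int.even_add,
        show Even (6 : ℤ) by decide]
  · refine ⟨0, _, Nat.zero_le _, ?_, (by rw [pow_zero, one_mul])⟩
    refine pre_odd _ _ _ ?_ ?_ n hn
    · simp [Int.even_mul, Int.even_pow, show Even (4 : ℤ) by decide]
    · subst hx hy
      simp [← Int.not_even_iff_odd, Int.even_sub, Int.even_mul, Int.even_pow, Int.even_add,
        show Even (6 : ℤ) by decide, show ¬ Even (3 : ℤ) by decide]
  · -- both odd
    subst hx hy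
    obtain ⟨c, hc⟩ := Int.even_mul_succ_self x
    obtain ⟨d, hd⟩ := Int.even_mul_succ_self y
    have ex : (2 * x + 1) ^ 2 = 8 * c + 1 := by linear_combination 4 * hc
    have ey : (2 * y + 1) ^ 2 = 8 * d + 1 := by linear_combination 4 * hd
    refine ⟨ee n, preNormEDS' (2 * ((2 * x + 1) * 8 * (c - d)) ^ 2)
      (48 * c ^ 2 - 96 * d * c - 16 * d ^ 2 - 16 * d - 1)
      (2 * (1 + 4 * (c + d)) *
        (16 * c ^ 2 - 96 * c * d + 16 * d ^ 2 - 8 * c - 8 * d - 1)) n, le_rfl, ?_, ?_⟩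
    · refine pre_odd _ _ _ (even_two_mul _) ?_ n hn
      exact ⟨24 * c ^ 2 - 48 * d * c - 8 * d ^ 2 - 8 * d - 1, by ring⟩
    · rw [← pre_scale, uu]
      congr 1
      · rw [ex, ey]; ring
      · rw [show 3 * (2 * x + 1) ^ 4 - 6 * (2 * y + 1) ^ 2 * (2 * x + 1) ^ 2 - (2 * y + 1) ^ 4 =
          3 * ((2 * x + 1) ^ 2) ^ 2 - 6 * (2 * y + 1) ^ 2 * (2 * x + 1) ^ 2 - ((2 * y + 1) ^ 2) ^ 2 by ring,
          ex, ey]; ring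
      · rw [show 2 * ((2 * x + 1) ^ 6 - 5 * (2 * y + 1) ^ 2 * (2 * x + 1) ^ 4 -
          5 * (2 * y + 1) ^ 4 * (2 * x + 1) ^ 2 + (2 * y + 1) ^ 6) =
          2 * (((2 * x + 1) ^ 2) ^ 3 - 5 * (2 * y + 1) ^ 2 * ((2 * x + 1) ^ 2) ^ 2 -
          5 * ((2 * y + 1) ^ 2) ^ 2 * (2 * x + 1) ^ 2 + ((2 * y + 1) ^ 2) ^ 3) by ring,
          ex, ey]; ring

theorem psi_eq (N : ℕ) (a b : ℤ) (hb : b ^ 2 = a ^ 3 - (N : ℤ) ^ 2 * a) (n : ℕ) (hn : Odd n) :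
    psiEN N a b n = preNormEDS' ((2 * b) ^ 4) (3 * a ^ 4 + 6 * (-(N : ℤ) ^ 2) * a ^ 2 - (-(N : ℤ) ^ 2) ^ 2)
      (2 * (a ^ 6 + 5 * (-(N : ℤ) ^ 2) * a ^ 4 - 5 * (-(N : ℤ) ^ 2) ^ 2 * a ^ 2
        - (-(N : ℤ) ^ 2) ^ 3)) n := by
  rw [psiEN, WeierstrassCurve.Ψ_ofNat, if_neg (Nat.not_even_iff_odd.mpr hn), mul_one,
    Polynomial.evalEval_C, WeierstrassCurve.preΨ', ← Polynomial.coe_evalRingHom, map_preNormEDS']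
  congr 1
  · rw [show (2 * b) ^ 4 = 16 * (b ^ 2) ^ 2 by ring, hb]
    simp [WeierstrassCurve.Ψ₂Sq, congruentCurveZ, WeierstrassCurve.b₂, WeierstrassCurve.b₄,
      WeierstrassCurve.b₆]
    ring
  · simp [WeierstrassCurve.Ψ₃, congruentCurveZ, WeierstrassCurve.b₂, WeierstrassCurve.b₄,
      WeierstrassCurve.b₆, WeierstrassCurve.b₈]
    ring
  · simp [WeierstrassCurve.preΨ₄, congruentCurveZ, WeierstrassCurve.b₂, WeierstrassCurve.b₄,
      WeierstrassCurve.b₆, WeierstrassCurve.b₈]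
    ring

theorem stmt4 (N : ℕ) (hN : 0 < N) (hsq : Squarefree N)
    (a b : ℤ) (h : (congruentCurve N).Nonsingular (a : ℚ) (b : ℚ))
    (hPtors : ∀ m : ℤ, 1 ≤ m →
      m • (WeierstrassCurve.Affine.Point.some _ _ h) ≠ 0)
    (n : ℤ) (hn : 1 ≤ n)
    (hint : IsIntegralPoint (n • (WeierstrassCurve.Affine.Point.some _ _ h))) :
    |(psiEN N a b n : ℝ)| ≤ (2 * (N : ℝ)) ^ ((((n : ℝ)) ^ 2 - 1) / 2) := by
  lift n to ℕ using by omega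
  have hn1 : 1 ≤ n := by exact_mod_cast hn
  obtain ⟨X, H, hX, hD⟩ := exists_XSeq N a b h hPtors
  obtain ⟨x, y, hxy, e, hden⟩ := hint
  have hZ : X n = (x.num : ℚ) := by
    obtain ⟨y', h', e'⟩ := hX n hn1
    rw [natCast_zsmul, e'] at e
    have := ((WeierstrassCurve.Affine.Point.some.injEq ..).mp e).1
    rw [this]
    exact ((Rat.den_eq_one_iff x).mp hden).symm
  generalize x.num = Z at hZ
  rcases Nat.even_or_odd n with hev | hodd
  · obtain ⟨m, hm⟩ := hev
    rw [← two_mul] at hm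
    subst hm
    obtain ⟨y, hy, hc, hd⟩ := hD m (by omega)
    rw [hZ] at hd
    exact (dbl_not_int N hsq _ y Z hy hc hd).elim
  have hb : b ^ 2 = a ^ 3 - (N : ℤ) ^ 2 * a := by
    have := H.curve
    have h2 : (b : ℚ) ^ 2 = (a : ℚ) ^ 3 - (N : ℚ) ^ 2 * a := by linear_combination this
    exact_mod_cast h2
  rw [psi_eq N a b hb n hodd]
  have hNz : (N : ℤ) ≠ 0 := by exact_mod_cast hN.ne'
  have hg : 0 < Int.gcd a N := Int.gcd_pos_of_ne_zero_right _ hNz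
  obtain ⟨a', N', hc, ea, eN⟩ := Int.exists_gcd_one hg
  generalize Int.gcd a N = t at *
  rw [mul_comm] at ea eN
  rw [← Int.isCoprime_iff_gcd_eq_one] at hc
  have ht : (t : ℤ) ≠ 0 := by exact_mod_cast hg.ne'
  have htN : t ∣ N := by exact_mod_cast (Dvd.intro _ eN.symm : (t : ℤ) ∣ N)
  have htsq : Squarefree (t : ℤ) := Int.squarefree_natCast.mpr (hsq.squarefree_of_dvd htN)
  have htle : t ≤ N := Nat.le_of_dvd hN htN
  have hNq : (N : ℚ) = ((N : ℤ) : ℚ) := by simp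
  rw [hNq] at H
  rw [ea, eN] at H hb ⊢
  rw [uu_scale t a' N' b hb]
  obtain ⟨j, w, hj, hw, hu⟩ := uu_two a' N' hc n hodd
  have hw1 : w.natAbs = 1 := by
    by_contra hne
    obtain ⟨p, hp, hpw⟩ := Nat.exists_prime_and_dvd hne
    have hpw : (p : ℤ) ∣ w := Int.natCast_dvd.mpr hpw
    refine uu_odd_prime t a' N' b X ht htsq hb hc H n hodd Z hZ p hp ?_ ?_
    · rintro rfl
      rw [← Int.not_even_iff_odd] at hw
      exact hw (even_iff_two_dvd.mpr hpw)
    · rw [hu]; exact hpw.mul_left _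
  have hw2 : |(w : ℝ)| = 1 := by
    have : |w| = 1 := by rw [Int.abs_eq_natAbs, hw1]; rfl
    exact_mod_cast this
  have hexp : ((((n : ℤ) : ℝ)) ^ 2 - 1) / 2 = ((2 * ee n : ℕ) : ℝ) := by
    obtain ⟨k, rfl⟩ := hodd
    rw [ee_odd]; push_cast; ring
  rw [hexp, Real.rpow_natCast, hu]
  push_cast
  rw [abs_mul, abs_mul, hw2, mul_one, abs_of_nonneg (by positivity), abs_of_nonneg (by positivity),
    mul_pow, mul_comm]
  have h3 : (t : ℝ) ≤ N := by exact_mod_cast htle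
  gcongr
  · norm_num
  · omega
end

section
/- Let E : y² = x³ + Ax + B be an elliptic curve with A, B ∈ ℤ, let P = (a, b) be a non-torsion point of E(ℚ) with a, b ∈ ℤ, and let n ≥ 1 be an integer. Writing the x-coordinate of nP in lowest terms as A_n/D_n² with A_n ∈ ℤ and D_n ≥ 1, the denominator D_n² divides ψ_n(P)²; in particular D_n ≤ |ψ_n(P)|. -/
/-- The short Weierstrass curve `y² = x³ + Ax + B` over `ℚ`, with `A, B ∈ ℤ`. -/
def shortCurveQ (A B : ℤ) : WeierstrassCurve.Affine ℚ :=
  { a₁ := 0, a₂ := 0, a₃ := 0, a₄ := (A : ℚ), a₆ := (B : ℚ) }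

/-- The short Weierstrass curve `y² = x³ + Ax + B` over `ℤ`. -/
def shortCurveZ (A B : ℤ) : WeierstrassCurve ℤ :=
  { a₁ := 0, a₂ := 0, a₃ := 0, a₄ := A, a₆ := B }

/-- The value `ψₙ(P)` of the `n`-th division polynomial at the integral point `P = (a, b)`. -/
noncomputable def psiShort (A B a b : ℤ) (n : ℤ) : ℤ :=
  ((shortCurveZ A B).Ψ n).evalEval a b

/-- The symmetric polynomial `K`. -/
def kkS (A B p q r : ℚ) : ℚ :=
  q^2*(r-p)^2 - 2*q*((r+p)*(r*p+A)+2*B) + ((r*p-A)^2 - 4*B*(r+p))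

/-- The auxiliary sequence. -/
noncomputable def qqS (b : ℚ) (X : ℕ → ℚ) : ℕ → ℚ
  | 0 => 0
  | 1 => 1
  | 2 => 2 * b
  | n + 3 => (X 1 - X (n+2)) * qqS b X (n+2) ^ 2 / qqS b X (n+1)

theorem kk_main (A B x1 y1 x2 y2 s d q : ℚ) (hx : x1 ≠ x2)
    (h1 : y1^2 = x1^3 + A*x1 + B) (h2 : y2^2 = x2^3 + A*x2 + B)
    (hs : s * (x1-x2)^2 = (y1-y2)^2 - (x1+x2)*(x1-x2)^2)
    (hd : d * (x1-x2)^2 = (y1+y2)^2 - (x1+x2)*(x1-x2)^2) :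
    (q - s) * (q - d) * (x1-x2)^2 = kkS A B x1 q x2 := by
  have hx' : x1 - x2 ≠ 0 := sub_ne_zero.mpr hx
  have hS : (s + d) * (x1-x2)^2 = 2*((x2+x1)*(x2*x1+A)+2*B) := by
    linear_combination hs + hd + 2*h1 + 2*h2
  have hT : s * d * (x1-x2)^2 = (x2*x1-A)^2 - 4*B*(x2+x1) := by
    apply mul_right_cancel₀ (pow_ne_zero 2 hx')
    have e : s * d * (x1-x2)^2 * (x1-x2)^2 = (s * (x1-x2)^2) * (d * (x1-x2)^2) := by ring
    rw [e, hs, hd]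
    have e2 : ((y1-y2)^2 - (x1+x2)*(x1-x2)^2) * ((y1+y2)^2 - (x1+x2)*(x1-x2)^2)
      = (y1^2 - y2^2)^2 - 2*(y1^2+y2^2)*(x1+x2)*(x1-x2)^2 + (x1+x2)^2*(x1-x2)^4 := by ring
    rw [e2, h1, h2]; ring
  unfold kkS
  linear_combination (-q) * hS + hT

section
variable (A B b : ℚ) (X Y : ℕ → ℚ)

theorem qq_ne (hb : b ≠ 0) (hne : ∀ m n, 1 ≤ n → n < m → X m ≠ X n) :
    ∀ n, 1 ≤ n → qqS b X n ≠ 0 := by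
  intro n
  induction n using Nat.strong_induction_on with
  | _ n ih =>
    intro hn
    match n, hn, ih with
    | 1, _, _ => simp [qqS]
    | 2, _, _ => simp [qqS, hb]
    | k + 3, _, ih =>
      rw [qqS]
      exact div_ne_zero (mul_ne_zero (sub_ne_zero.mpr (hne _ _ le_rfl (by omega)).symm)
        (pow_ne_zero 2 (ih _ (by omega) (by omega)))) (ih _ (by omega) (by omega))

theorem qq_one (hb : b ≠ 0) (hne : ∀ m n, 1 ≤ n → n < m → X m ≠ X n) (n : ℕ) :
    qqS b X (n+2) * qqS b X n = (X 1 - X (n+1)) * qqS b X (n+1) ^ 2 := by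
  match n with
  | 0 => simp [qqS]
  | k + 1 =>
    rw [qqS]
    exact div_mul_cancel₀ _ (qq_ne b X hb hne _ (by omega))

theorem qq_key (hb : b ≠ 0) (hne : ∀ m n, 1 ≤ n → n < m → X m ≠ X n)
    (hK : ∀ m n q, 1 ≤ n → n < m →
      (q - X (m+n)) * (q - X (m-n)) * (X m - X n)^2 = kkS A B (X m) q (X n))
    (hb2 : b^2 = X 1^3 + A * X 1 + B)
    (hX2 : X 2 * (2*b)^2 = (3 * X 1^2 + A)^2 - 2 * X 1 * (2*b)^2) (n : ℕ) :
    (∀ k, 1 ≤ k → qqS b X ((n+1+k)+(n+1)) * qqS b X k =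
      (X (n+1) - X (n+1+k)) * qqS b X (n+1+k)^2 * qqS b X (n+1)^2) ∧
    (∀ k, 1 ≤ k → qqS b X ((n+2+k)+(n+2)) * qqS b X k =
      (X (n+2) - X (n+2+k)) * qqS b X (n+2+k)^2 * qqS b X (n+2)^2) := by
  have q0 := qq_ne b X hb hne
  have h1 := qq_one b X hb hne
  induction n with
  | zero =>
    refine ⟨fun k hk => ?_, fun k hk => ?_⟩
    · have := h1 k
      rw [show 0+1+k+(0+1) = k+2 by ring, show 0+1+k = k+1 by ring, this]
      simp [qqS]
    · rw [show 0+2+k+(0+2) = k+4 by ring, show 0+2+k = k+2 by ring]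
      have ea := h1 (k+2)
      have eb := h1 k
      have ec := h1 (k+1)
      have kk := hK (k+2) 1 (X 1) le_rfl (by omega)
      simp only [show k+2+2 = k+4 by ring, show k+2+1 = k+3 by ring, show k+1+2 = k+3 by ring,
        show k+1+1=k+2 by ring, show k+2-1 = k+1 by omega] at ea eb ec kk
      have hq2 : qqS b X (0+2) = 2*b := by simp [qqS]
      rw [hq2]
      simp only [zero_add]
      have n2 := q0 (k+2) (by omega)
      apply mul_right_cancel₀ (pow_ne_zero 2 n2)
      have kk2 : kkS A B (X (k+2)) (X 1) (X 1) = (X 2 - X (k+2)) * (2*b)^2 := by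
        rw [sub_mul, hX2]
        unfold kkS
        linear_combination (8 * X 1 + 4 * X (k+2)) * hb2
      calc qqS b X (k+4) * qqS b X k * qqS b X (k+2)^2
          = (qqS b X (k+4) * qqS b X (k+2)) * (qqS b X (k+2) * qqS b X k) := by ring
        _ = (X 1 - X (k+3)) * (X 1 - X (k+1)) * (qqS b X (k+3) * qqS b X (k+1))^2 := by
            rw [ea, eb]; ring
        _ = ((X 1 - X (k+3)) * (X 1 - X (k+1)) * (X (k+2) - X 1)^2) * qqS b X (k+2)^4 := by
            rw [ec]; ring
        _ = _ := by rw [kk, kk2]; ring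
  | succ n ih =>
    refine ⟨ih.2, fun k hk => ?_⟩
    -- new index N+1 = n+3, N = n+2, N-1 = n+1, m = n+3+k
    have f1 := ih.1 (k+2) (by omega)
    have f2 := ih.2 (k+1) (by omega)
    have ea := h1 (n+3+k+(n+1))
    have eb := h1 k
    have ec := h1 (n+1)
    have k1 := hK (n+3+k) (n+2) (X 1) (by omega) (by omega)
    have k2 := hK (n+2) 1 (X (n+3+k)) (by omega) (by omega)
    simp only [show n+1+2 = n+3 by ring, show n+1+1 = n+2 by ring, show n+2+1 = n+3 by ring,
      show n+2-1 = n+1 by omega, show n+3+k-(n+2) = k+1 by omega,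
      show n+3+k+(n+1)+2 = n+3+k+(n+3) by ring, show n+3+k+(n+1)+1 = n+3+k+(n+2) by ring,
      show n+1+(k+2) = n+3+k by ring, show n+2+(k+1) = n+3+k by ring] at *
    have nz : qqS b X (n+3+k+(n+1)) * qqS b X (k+2) ≠ 0 :=
      mul_ne_zero (q0 _ (by omega)) (q0 _ (by omega))
    have ks : kkS A B (X (n+3+k)) (X 1) (X (n+2)) = kkS A B (X (n+2)) (X (n+3+k)) (X 1) := by
      unfold kkS; ring
    apply mul_right_cancel₀ nz
    generalize qqS b X (n+3+k+(n+3)) = u1 at *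
    generalize qqS b X (n+3+k+(n+1)) = u2 at *
    generalize qqS b X (n+3+k+(n+2)) = u3 at *
    calc u1 * qqS b X k * (u2 * qqS b X (k+2))
        = (u1 * u2) * (qqS b X (k+2) * qqS b X k) := by ring
      _ = (X 1 - X (n+3+k+(n+2))) * (X 1 - X (k+1)) * (u3 * qqS b X (k+1))^2 := by
          rw [ea, eb]; ring
      _ = ((X 1 - X (n+3+k+(n+2))) * (X 1 - X (k+1)) * (X (n+3+k) - X (n+2))^2)
            * (qqS b X (n+3+k)^4 * qqS b X (n+2)^4) := by rw [f2]; ring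
      _ = ((X (n+3+k) - X (n+3)) * (X (n+3+k) - X (n+1)) * (X (n+2) - X 1)^2)
            * (qqS b X (n+3+k)^4 * qqS b X (n+2)^4) := by rw [k1, ks, k2]
      _ = ((X (n+3+k) - X (n+3)) * (X (n+3+k) - X (n+1)) * qqS b X (n+3+k)^4)
            * ((X 1 - X (n+2)) * qqS b X (n+2)^2)^2 := by ring
      _ = ((X (n+3+k) - X (n+3)) * (X (n+3+k) - X (n+1)) * qqS b X (n+3+k)^4)
            * (qqS b X (n+3) * qqS b X (n+1))^2 := by rw [ec]
      _ = _ := by rw [f1]; ring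

theorem qq_eds (hb : b ≠ 0) (hne : ∀ m n, 1 ≤ n → n < m → X m ≠ X n)
    (hK : ∀ m n q, 1 ≤ n → n < m →
      (q - X (m+n)) * (q - X (m-n)) * (X m - X n)^2 = kkS A B (X m) q (X n))
    (hb2 : b^2 = X 1^3 + A * X 1 + B)
    (hX2 : X 2 * (2*b)^2 = (3 * X 1^2 + A)^2 - 2 * X 1 * (2*b)^2)
    (hY2 : 2 * b * Y 2 = (3 * X 1^2 + A) * (X 1 - X 2) - 2*b^2)
    (hX3 : (X 1 - X 3) * (X 2 - X 1)^2 = 4 * Y 2 * b)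
    (c d : ℚ) (hc : c = 3 * X 1^4 + 6*A*X 1^2 + 12*B*X 1 - A^2)
    (hd : d = 2*(X 1^6 + 5*A*X 1^4 + 20*B*X 1^3 - 5*A^2*X 1^2 - 4*A*B*X 1 - 8*B^2 - A^3)) (n : ℕ) :
    qqS b X n = normEDS (2*b) c d n := by
  have q0 := qq_ne b X hb hne
  have h1 := qq_one b X hb hne
  have key := fun n => (qq_key A B b X hb hne hK hb2 hX2 n).1
  have q2 : qqS b X 2 = 2*b := by simp [qqS]
  have q3' : qqS b X 3 = (X 1 - X 2) * (2*b)^2 := by have := h1 1; simpa [qqS] using this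
  have q3 : qqS b X 3 = c := by
    rw [q3', sub_mul, hX2, hc]
    linear_combination (12 * X 1) * hb2
  have hB : B = b^2 - X 1^3 - A * X 1 := by linear_combination -hb2
  induction n using normEDSRec with
  | zero => simp [qqS]
  | one => simp [qqS]
  | two => push_cast; rw [normEDS_two, q2]
  | three => push_cast; rw [normEDS_three, q3]
  | four =>
    push_cast; rw [normEDS_four]
    have e := h1 2
    simp only [show 2+2 = 4 by rfl, show 2+1 = 3 by rfl, q2, q3'] at e
    have hb' : 2*b ≠ 0 := by simpa using hb
    apply mul_right_cancel₀ hb'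
    rw [e]
    have e2 : (X 1 - X 3) * ((X 1 - X 2) * (2*b)^2)^2 = (2 * b * Y 2) * (2*b)^2 * (8 * b^2) := by
      linear_combination (2*b)^4 * hX3
    have e3 : (X 1 - X 2) * (2*b)^2 = c := by rw [← q3', q3]
    rw [e2, hY2]
    have e4 : ((3 * X 1^2 + A) * (X 1 - X 2) - 2*b^2) * (2*b)^2
       = (3 * X 1^2 + A) * c - 8*b^4 := by rw [← e3]; ring
    rw [e4, hc, hd, hB]; ring
  | even m i1 i2 i3 i4 i5 =>
    have hb' : 2*b ≠ 0 := by simpa using hb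
    apply mul_right_cancel₀ hb'
    push_cast
    rw [normEDS_even]
    rw [show ((m:ℤ)+3-1) = ((m+2 : ℕ) : ℤ) by push_cast; ring,
      show ((m:ℤ)+3+2) = ((m+5 : ℕ) : ℤ) by push_cast; ring,
      show ((m:ℤ)+3-2) = ((m+1 : ℕ) : ℤ) by push_cast; ring,
      show ((m:ℤ)+3+1) = ((m+4 : ℕ) : ℤ) by push_cast; ring,
      show ((m:ℤ)+3) = ((m+3 : ℕ) : ℤ) by push_cast; ring,
      ← i1, ← i2, ← i3, ← i4, ← i5, ← q2]
    have e := key (m+1) 2 (by omega)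
    have ea := h1 (m+1)
    have eb := h1 (m+3)
    simp only [show m+1+1+2+(m+1+1) = 2*(m+3) by ring, show m+1+1+2 = m+4 by ring,
      show m+1+1 = m+2 by ring, show m+1+2 = m+3 by ring, show m+3+2 = m+5 by ring,
      show m+3+1 = m+4 by ring] at e ea eb
    rw [e]
    linear_combination qqS b X (m+2)^2 * (-eb) + qqS b X (m+4)^2 * ea
  | odd m i1 i2 i3 i4 =>
    push_cast
    rw [normEDS_odd]
    rw [show ((m:ℤ)+2-1) = ((m+1 : ℕ) : ℤ) by push_cast; ring,
      show ((m:ℤ)+2+2) = ((m+4 : ℕ) : ℤ) by push_cast; ring,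
      show ((m:ℤ)+2+1) = ((m+3 : ℕ) : ℤ) by push_cast; ring,
      show ((m:ℤ)+2) = ((m+2 : ℕ) : ℤ) by push_cast; ring,
      ← i1, ← i2, ← i3, ← i4]
    have e := key (m+1) 1 (by omega)
    have ea := h1 (m+1)
    have eb := h1 (m+2)
    have q1 : qqS b X 1 = 1 := by simp [qqS]
    simp only [show m+1+1+1+(m+1+1) = 2*(m+2)+1 by ring, show m+1+1+1 = m+3 by ring,
      show m+1+1 = m+2 by ring, show m+1+2 = m+3 by ring, show m+2+2 = m+4 by ring,
      show m+2+1 = m+3 by ring, q1, mul_one] at e ea eb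
    rw [e]
    linear_combination qqS b X (m+2)^2 * (-eb) + qqS b X (m+3)^2 * ea

end

theorem psi_norm (A B a b : ℤ) (hab : b^2 = a^3 + A*a + B) (n : ℤ) :
    psiShort A B a b n = normEDS (2*b) (3 * a^4 + 6*A*a^2 + 12*B*a - A^2)
      (2*(a^6 + 5*A*a^4 + 20*B*a^3 - 5*A^2*a^2 - 4*A*B*a - 8*B^2 - A^3)) n := by
  unfold psiShort WeierstrassCurve.Ψ WeierstrassCurve.preΨ normEDS
  rw [Polynomial.evalEval_mul, Polynomial.evalEval_C]
  have e2 : (shortCurveZ A B).ψ₂.evalEval a b = 2*b := by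
    simp [WeierstrassCurve.ψ₂, WeierstrassCurve.Affine.evalEval_polynomialY, shortCurveZ]
  have e : ∀ p : Polynomial ℤ, Polynomial.eval a p = Polynomial.evalRingHom a p := fun _ => rfl
  rw [e, map_preNormEDS]
  congr 1
  · congr 1
    · simp [WeierstrassCurve.Ψ₂Sq, shortCurveZ, WeierstrassCurve.b₂, WeierstrassCurve.b₄,
        WeierstrassCurve.b₆]
      have : (2*b)^4 = 16 * (b^2)^2 := by ring
      rw [this, hab]; ring
    · simp [WeierstrassCurve.Ψ₃, shortCurveZ, WeierstrassCurve.b₂, WeierstrassCurve.b₄,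
        WeierstrassCurve.b₆, WeierstrassCurve.b₈]
      ring
    · simp [WeierstrassCurve.preΨ₄, shortCurveZ, WeierstrassCurve.b₂, WeierstrassCurve.b₄,
        WeierstrassCurve.b₆, WeierstrassCurve.b₈]
      ring
  · split_ifs
    · exact e2
    · simp

theorem sc_eq (A B : ℤ) {x y : ℚ} (h : (shortCurveQ A B).Nonsingular x y) :
    y^2 = x^3 + A*x + B := by
  have := (WeierstrassCurve.Affine.equation_iff _ _).mp h.1
  simpa [shortCurveQ] using this

theorem sc_add (A B : ℤ) {x1 y1 x2 y2 x3 y3 : ℚ} (h1 : (shortCurveQ A B).Nonsingular x1 y1)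
    (h2 : (shortCurveQ A B).Nonsingular x2 y2) (h3 : (shortCurveQ A B).Nonsingular x3 y3)
    (hx : x1 ≠ x2)
    (h : WeierstrassCurve.Affine.Point.some _ _ h1 + WeierstrassCurve.Affine.Point.some _ _ h2
      = WeierstrassCurve.Affine.Point.some _ _ h3) :
    x3 * (x1-x2)^2 = (y1-y2)^2 - (x1+x2)*(x1-x2)^2 := by
  rw [WeierstrassCurve.Affine.Point.add_of_X_ne hx,
    WeierstrassCurve.Affine.Point.some.injEq] at h
  have hx' : x1 - x2 ≠ 0 := sub_ne_zero.mpr hx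
  rw [← h.1, WeierstrassCurve.Affine.slope_of_X_ne hx]
  simp only [WeierstrassCurve.Affine.addX, shortCurveQ]
  field_simp
  ring

theorem sc_dbl (A B : ℤ) {x1 y1 x3 y3 : ℚ} (h1 : (shortCurveQ A B).Nonsingular x1 y1)
    (h3 : (shortCurveQ A B).Nonsingular x3 y3)
    (h : WeierstrassCurve.Affine.Point.some _ _ h1 + WeierstrassCurve.Affine.Point.some _ _ h1
      = WeierstrassCurve.Affine.Point.some _ _ h3) :
    y1 ≠ 0 ∧ x3 * (2*y1)^2 = (3 * x1^2 + A)^2 - 2 * x1 * (2*y1)^2 ∧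
    2 * y1 * y3 = (3 * x1^2 + A) * (x1 - x3) - 2*y1^2 := by
  have hy : y1 ≠ 0 := by
    rintro rfl
    rw [WeierstrassCurve.Affine.Point.add_self_of_Y_eq (by simp [shortCurveQ])] at h
    cases h
  have hn : y1 ≠ (shortCurveQ A B).negY x1 y1 := by
    simp [shortCurveQ]
    intro h; apply hy; linarith
  rw [WeierstrassCurve.Affine.Point.add_self_of_Y_ne hn,
    WeierstrassCurve.Affine.Point.some.injEq] at h
  have hs : (shortCurveQ A B).slope x1 x1 y1 y1 = (3*x1^2 + A)/(2*y1) := by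
    rw [WeierstrassCurve.Affine.slope_of_Y_ne rfl hn]
    simp [shortCurveQ]; ring
  rw [hs] at h
  obtain ⟨ha, hb⟩ := h
  refine ⟨hy, ?_, ?_⟩
  · rw [← ha]
    simp only [WeierstrassCurve.Affine.addX, shortCurveQ]
    field_simp
    ring
  · rw [← hb, WeierstrassCurve.Affine.addY, WeierstrassCurve.Affine.negAddY, ha]
    simp only [WeierstrassCurve.Affine.negY, shortCurveQ]
    field_simp
    ring

theorem stmt16 (A B : ℤ) (hΔ : 4 * A ^ 3 + 27 * B ^ 2 ≠ 0)
    (a b : ℤ) (h : (shortCurveQ A B).Nonsingular (a : ℚ) (b : ℚ))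
    (hPtors : ∀ m : ℤ, 1 ≤ m →
      m • (WeierstrassCurve.Affine.Point.some _ _ h) ≠ 0)
    (n : ℤ) (hn : 1 ≤ n)
    (x y : ℚ) (h' : (shortCurveQ A B).Nonsingular x y)
    (hnP : n • (WeierstrassCurve.Affine.Point.some _ _ h) =
      WeierstrassCurve.Affine.Point.some _ _ h')
    (D : ℕ) (hD : 1 ≤ D) (hden : x.den = D ^ 2) :
    ((D : ℤ) ^ 2 ∣ psiShort A B a b n ^ 2) ∧ (D : ℤ) ≤ |psiShort A B a b n| := by
  set P := WeierstrassCurve.Affine.Point.some _ _ h with hP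
  have ex : ∀ m : ℕ, ∃ x y : ℚ, 1 ≤ m → ∃ hh : (shortCurveQ A B).Nonsingular x y,
      (m : ℤ) • P = WeierstrassCurve.Affine.Point.some _ _ hh := by
    intro m
    by_cases hm : 1 ≤ m
    · have := hPtors m (by exact_mod_cast hm)
      rcases hc : (m : ℤ) • P with _ | ⟨u, v, w⟩
      · exact absurd hc this
      · exact ⟨u, v, fun _ => ⟨w, rfl⟩⟩
    · exact ⟨0, 0, fun h => absurd h hm⟩
  choose X Y hXY using ex
  have nonz : ∀ m : ℤ, m ≠ 0 → m • P ≠ 0 := by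
    intro m hm h0
    rcases lt_or_gt_of_ne hm with h1 | h1
    · exact hPtors (-m) (by omega) (by rw [neg_zsmul, h0, neg_zero])
    · exact hPtors m (by omega) h0
  have hne : ∀ m n, 1 ≤ n → n < m → X m ≠ X n := by
    intro m n hn hm hx
    obtain ⟨w1, e1⟩ := hXY m (by omega)
    obtain ⟨w2, e2⟩ := hXY n hn
    rcases (WeierstrassCurve.Affine.Point.X_eq_iff (h₁ := w1) (h₂ := w2)).mp hx with h | h
    · rw [← e1, ← e2] at h
      exact nonz (m - n) (by omega) (by rw [sub_zsmul, h, add_neg_cancel])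
    · rw [← e1, ← e2] at h
      exact nonz (m + n) (by omega) (by rw [add_zsmul, h, neg_add_cancel])
  have hS : ∀ m n, 1 ≤ n → n < m →
      X (m+n) * (X m - X n)^2 = (Y m - Y n)^2 - (X m + X n) * (X m - X n)^2 := by
    intro m n hn hm
    obtain ⟨w1, e1⟩ := hXY m (by omega)
    obtain ⟨w2, e2⟩ := hXY n hn
    obtain ⟨w3, e3⟩ := hXY (m+n) (by omega)
    refine sc_add A B w1 w2 w3 (hne m n hn hm) ?_
    rw [← e1, ← e2, ← e3, ← add_zsmul]; push_cast; rfl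
  have hDf : ∀ m n, 1 ≤ n → n < m →
      X (m-n) * (X m - X n)^2 = (Y m + Y n)^2 - (X m + X n) * (X m - X n)^2 := by
    intro m n hn hm
    obtain ⟨w1, e1⟩ := hXY m (by omega)
    obtain ⟨w2, e2⟩ := hXY n hn
    obtain ⟨w3, e3⟩ := hXY (m-n) (by omega)
    have := sc_add A B w1 ((WeierstrassCurve.Affine.nonsingular_neg ..).mpr w2) w3
      (hne m n hn hm) (by
        rw [← WeierstrassCurve.Affine.Point.neg_some w2, ← e1, ← e2, ← e3, ← sub_zsmul]
        push_cast [hm.le]; rfl)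
    rw [this]
    simp [shortCurveQ]
  have hE : ∀ m, 1 ≤ m → Y m^2 = X m^3 + A * X m + B := by
    intro m hm
    obtain ⟨w1, e1⟩ := hXY m hm
    exact sc_eq A B w1
  have h1 : X 1 = a ∧ Y 1 = b := by
    obtain ⟨w1, e1⟩ := hXY 1 le_rfl
    rw [Nat.cast_one, one_smul, hP, WeierstrassCurve.Affine.Point.some.injEq] at e1
    exact ⟨e1.1.symm, e1.2.symm⟩
  obtain ⟨hX1, hY1⟩ := h1
  have hK : ∀ m n q, 1 ≤ n → n < m →
      (q - X (m+n)) * (q - X (m-n)) * (X m - X n)^2 = kkS A B (X m) q (X n) := by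
    intro m n q hn hm
    exact kk_main A B _ _ _ _ _ _ q (hne m n hn hm) (hE m (by omega)) (hE n hn)
      (hS m n hn hm) (hDf m n hn hm)
  obtain ⟨hb0, hX2, hY2⟩ : (b:ℚ) ≠ 0 ∧ X 2 * (2*b)^2 = (3 * X 1^2 + A)^2 - 2 * X 1 * (2*b)^2 ∧
      2 * b * Y 2 = (3 * X 1^2 + A) * (X 1 - X 2) - 2*(b:ℚ)^2 := by
    obtain ⟨w2, e2⟩ := hXY 2 (by omega)
    rw [hX1]
    refine sc_dbl A B h w2 ?_
    rw [← e2, ← hP]; push_cast; rw [two_zsmul]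
  have hX3 : (X 1 - X 3) * (X 2 - X 1)^2 = 4 * Y 2 * b := by
    have u := hS 2 1 le_rfl (by omega)
    have v := hDf 2 1 le_rfl (by omega)
    simp only [show 2+1 = 3 by rfl, show 2-1 = 1 by rfl] at u v
    rw [← hY1]
    linear_combination v - u
  have hab := hE 1 le_rfl
  rw [hY1] at hab
  have heds := qq_eds A B b X Y hb0 hne hK hab hX2 hY2 hX3 _ _ rfl rfl
  have habZ : b^2 = a^3 + A*a + B := by
    rw [hX1] at hab; exact_mod_cast hab
  have hpsi : ∀ m : ℕ, qqS b X m = psiShort A B a b m := by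
    intro m
    rw [heds, psi_norm A B a b habZ, hX1]
    have := map_normEDS (Int.castRingHom ℚ) (2*b) (3 * a^4 + 6*A*a^2 + 12*B*a - A^2)
      (2*(a^6 + 5*A*a^4 + 20*B*a^3 - 5*A^2*a^2 - 4*A*B*a - 8*B^2 - A^3)) m
    simp only [eq_intCast] at this
    rw [this]
    push_cast
    rfl
  obtain ⟨k, rfl⟩ : ∃ k : ℕ, n = ((k + 1 : ℕ) : ℤ) := ⟨(n-1).toNat, by omega⟩
  have hx : X (k+1) = x := by
    obtain ⟨w, e⟩ := hXY (k+1) (by omega)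
    rw [e, WeierstrassCurve.Affine.Point.some.injEq] at hnP
    exact hnP.1
  have hq := qq_one (b:ℚ) X hb0 hne k
  have hq0 := qq_ne (b:ℚ) X hb0 hne (k+1) (by omega)
  rw [hpsi, hpsi, hpsi, hx, hX1] at hq
  rw [hpsi] at hq0
  set p := psiShort A B a b ((k+1 : ℕ) : ℤ)
  generalize psiShort A B a b ((k+2 : ℕ) : ℤ) = u at hq
  generalize psiShort A B a b (k : ℤ) = v at hq
  have hp0 : p ≠ 0 := by exact_mod_cast hq0
  have hdvd : (D : ℤ)^2 ∣ p^2 := by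
    set z : ℤ := a * p^2 - u * v
    have hz : x * (p:ℚ)^2 = z := by
      simp only [z]; push_cast; linear_combination hq
    have hz2 : x.num * p^2 = z * x.den := by
      have hd : (x.den : ℚ) ≠ 0 := by exact_mod_cast x.den_nz
      have : (x.num : ℚ) * p^2 = z * x.den := by
        rw [← hz, ← Rat.mul_den_eq_num]; ring
      exact_mod_cast this
    have hco : IsCoprime (x.den : ℤ) x.num := by
      rw [Int.isCoprime_iff_gcd_eq_one, Int.gcd_comm]
      exact x.reduced
    have : (x.den : ℤ) ∣ p^2 := hco.dvd_of_dvd_mul_left (hz2 ▸ Dvd.intro_left z rfl)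
    rw [hden] at this
    exact_mod_cast this
  refine ⟨hdvd, ?_⟩
  have h2 : (D : ℤ) ∣ p := (Int.pow_dvd_pow_iff (by norm_num)).mp hdvd
  exact Int.le_of_dvd (abs_pos.mpr hp0) ((dvd_abs _ _).mpr h2)
end
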